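/- Let (X,ρ) be a separable metric space, μ a Borel probability measure on X, q ∈ ℝ, and ξ ∈ Φ_D a blanketed premeasure. Assume either q ≤ 0, or q > 0 and μ is blanketed. Then there exists a constant β > 0 such that for every E ⊆ X, β · H^{q,ξ}_μ(E) ≤ W^{q,ξ}_μ(E). In particular, H^{q,ξ}_μ(E) = +∞ if and only if W^{q,ξ}_μ(E) = +∞. -/

import Mathlib

open Metric MeasureTheory Set Filter TopologicalSpace
open scoped ENNReal NNReal Classical

noncomputable section

/-- `x ^ q` for extended nonnegative reals, with the paper's convention
`0 ^ q = ∞` for `q ≤ 0`. -/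
def epow (x : ℝ≥0∞) (q : ℝ) : ℝ≥0∞ := if x = 0 ∧ q ≤ 0 then ∞ else x ^ q

variable {X X' : Type*}

section Defs

variable [MetricSpace X] [MetricSpace X']

/-- A premeasure on a metric space: an increasing `[0,∞]`-valued function on the family of
closed balls, vanishing on the empty set. -/
def IsPremeasure (ξ : Set X → ℝ≥0∞) : Prop :=
  ξ ∅ = 0 ∧ ∀ (x : X) (r : ℝ) (x' : X) (r' : ℝ),
    closedBall x r ⊆ closedBall x' r' → ξ (closedBall x r) ≤ ξ (closedBall x' r')

/-- The doubling ("blanketed") condition defining the class `Φ_D` of premeasures: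
`ξ(B(x,2r)) ≤ K ξ(B(x,r))` for some constant `K > 1`, all `x` and all `0 < r ≤ 1`. -/
def PremeasureBlanketed (ξ : Set X → ℝ≥0∞) : Prop :=
  ∃ K : ℝ≥0, 1 < K ∧ ∀ (x : X) (r : ℝ), 0 < r → r ≤ 1 →
    ξ (closedBall x (2 * r)) ≤ (K : ℝ≥0∞) * ξ (closedBall x r)

variable [MeasurableSpace X] [MeasurableSpace X']

/-- The support of a Borel measure on a metric space. -/
def measSupport (μ : Measure X) : Set X := {x : X | ∀ r : ℝ, 0 < r → 0 < μ (ball x r)}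

/-- A blanketed (doubling) measure: for some `a > 1`,
`limsup_{r → 0⁺} sup_{x ∈ supp μ} μ(B(x,ar)) / μ(B(x,r)) < ∞`. -/
def MeasureBlanketed (μ : Measure X) : Prop :=
  ∃ a : ℝ, 1 < a ∧
    limsup (fun r : ℝ => ⨆ x ∈ measSupport μ,
      μ (closedBall x (a * r)) / μ (closedBall x r)) (nhdsWithin 0 (Ioi 0)) < ∞

/-- The quantity `μ(B)^q ξ(B)` attached to a ball `B`. -/
def ballWeight (μ : Measure X) (q : ℝ) (ξ : Set X → ℝ≥0∞) (B : Set X) : ℝ≥0∞ :=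
  epow (μ B) q * ξ B

/-- A centered `δ`-cover of `E`: countably many closed balls centered in `E`, of diameters
at most `2δ`, covering `E`. -/
def IsCenteredCover (E : Set X) (δ : ℝ) (c : ℕ → X) (r : ℕ → ℝ) : Prop :=
  (∀ i, c i ∈ E) ∧ (∀ i, diam (closedBall (c i) (r i)) ≤ 2 * δ) ∧
    E ⊆ ⋃ i, closedBall (c i) (r i)

/-- The pre-Hausdorff quantity `H^{q,ξ}_{μ,δ}(E)`. -/
def Hd (μ : Measure X) (q : ℝ) (ξ : Set X → ℝ≥0∞) (δ : ℝ) (E : Set X) : ℝ≥0∞ :=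
  if E = ∅ then 0 else
    ⨅ (c : ℕ → X) (r : ℕ → ℝ) (_ : IsCenteredCover E δ c r),
      ∑' i, ballWeight μ q ξ (closedBall (c i) (r i))

/-- `H^{q,ξ}_{μ,0}(E) = sup_{δ > 0} H^{q,ξ}_{μ,δ}(E)`. -/
def H0 (μ : Measure X) (q : ℝ) (ξ : Set X → ℝ≥0∞) (E : Set X) : ℝ≥0∞ :=
  ⨆ (δ : ℝ) (_ : 0 < δ), Hd μ q ξ δ E

/-- The generalized Hausdorff measure `H^{q,ξ}_μ(E) = sup_{F ⊆ E} H^{q,ξ}_{μ,0}(F)`. -/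
def HM (μ : Measure X) (q : ℝ) (ξ : Set X → ℝ≥0∞) (E : Set X) : ℝ≥0∞ :=
  ⨆ (F : Set X) (_ : F ⊆ E), H0 μ q ξ F

/-- A weighted and centered `δ`-cover of `E`: countably many pairs `(w i, B i)` of nonnegative
weights and closed balls centered in `E` of diameters at most `2δ`, with
`Σ {w i : x ∈ B i} ≥ 1` for every `x ∈ E`. -/
def IsWeightedCover (E : Set X) (δ : ℝ) (w : ℕ → ℝ≥0) (c : ℕ → X) (r : ℕ → ℝ) : Prop :=
  (∀ i, c i ∈ E) ∧ (∀ i, diam (closedBall (c i) (r i)) ≤ 2 * δ) ∧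
    ∀ x ∈ E, 1 ≤ ∑' i, (if x ∈ closedBall (c i) (r i) then (w i : ℝ≥0∞) else 0)

/-- The pre-weighted-Hausdorff quantity `W^{q,ξ}_{μ,δ}(E)`. -/
def Wd (μ : Measure X) (q : ℝ) (ξ : Set X → ℝ≥0∞) (δ : ℝ) (E : Set X) : ℝ≥0∞ :=
  if E = ∅ then 0 else
    ⨅ (w : ℕ → ℝ≥0) (c : ℕ → X) (r : ℕ → ℝ) (_ : IsWeightedCover E δ w c r),
      ∑' i, (w i : ℝ≥0∞) * ballWeight μ q ξ (closedBall (c i) (r i))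

/-- `W^{q,ξ}_{μ,0}(E) = sup_{δ > 0} W^{q,ξ}_{μ,δ}(E)`. -/
def W0 (μ : Measure X) (q : ℝ) (ξ : Set X → ℝ≥0∞) (E : Set X) : ℝ≥0∞ :=
  ⨆ (δ : ℝ) (_ : 0 < δ), Wd μ q ξ δ E

/-- The weighted generalized Hausdorff measure `W^{q,ξ}_μ(E) = sup_{F ⊆ E} W^{q,ξ}_{μ,0}(F)`. -/
def WM (μ : Measure X) (q : ℝ) (ξ : Set X → ℝ≥0∞) (E : Set X) : ℝ≥0∞ :=
  ⨆ (F : Set X) (_ : F ⊆ E), W0 μ q ξ F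

/-- Hypothesis (H) for `(X, ξ, μ)`: for every `ε > 0`, `X` can be covered by countably many
closed balls of diameters `< ε` on which `μ(B)^q ξ(B)` is finite. -/
def HypH (μ : Measure X) (q : ℝ) (ξ : Set X → ℝ≥0∞) : Prop :=
  ∀ ε : ℝ, 0 < ε → ∃ (c : ℕ → X) (r : ℕ → ℝ),
    (univ : Set X) ⊆ (⋃ i, closedBall (c i) (r i)) ∧
    (∀ i, diam (closedBall (c i) (r i)) < ε) ∧
    ∀ i, ballWeight μ q ξ (closedBall (c i) (r i)) < ∞

/-- The product premeasure `ξ₀(B × B') = ξ(B) ξ'(B')` on the product space (whose closed balls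
are exactly the products `B(x,r) × B(x',r)`), with the convention `0 ⬝ ∞ = ∞ ⬝ 0 = 0`. -/
def prodPre (ξ : Set X → ℝ≥0∞) (ξ' : Set X' → ℝ≥0∞) : Set (X × X') → ℝ≥0∞ :=
  fun S => ξ (Prod.fst '' S) * ξ' (Prod.snd '' S)

/-- Two sets are (positively) separated: `inf {ρ(x,y) : x ∈ E, y ∈ F} > 0`. -/
def SepSets (E F : Set X) : Prop := 0 < ⨅ x ∈ E, ⨅ y ∈ F, edist x y

/-- The upper `(q,ξ)`-density of `ν` at `x` with respect to `μ`:
`limsup_{r → 0⁺} ν(B(x,r)) / (μ(B(x,r))^q ξ(B(x,r)))`. -/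
def upperDensity (μ : Measure X) (q : ℝ) (ξ : Set X → ℝ≥0∞) (x : X) (ν : Measure X) : ℝ≥0∞ :=
  limsup (fun r : ℝ => ν (closedBall x r) / ballWeight μ q ξ (closedBall x r))
    (nhdsWithin 0 (Ioi 0))

/-- A Hausdorff function: right continuous, monotone increasing `h : [0,∞] → [0,∞]` with
`h(0) = 0` and `h(r) > 0` for `r > 0`. -/
def IsHausdorffFunction (h : ℝ≥0∞ → ℝ≥0∞) : Prop :=
  Monotone h ∧ h 0 = 0 ∧ (∀ r : ℝ≥0∞, 0 < r → 0 < h r) ∧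
    ∀ r : ℝ≥0∞, ContinuousWithinAt h (Ici r) r

/-- The premeasure `ξ_h` induced by a Hausdorff function: `ξ_h(B) = h(diam B)` for `B ≠ ∅`,
`ξ_h(∅) = 0`. -/
def hausPre (h : ℝ≥0∞ → ℝ≥0∞) : Set X → ℝ≥0∞ :=
  fun B => if B = ∅ then 0 else h (EMetric.diam B)

end Defs


def PP : Measure ℝ := volume.restrict (Icc 0 1)

instance : IsProbabilityMeasure PP := ⟨by simp [PP]⟩

lemma PP_sel (A : Set ℝ) (hA : MeasurableSet A) (w : ℝ≥0∞) :
    ∃ T ⊆ A, MeasurableSet T ∧ PP T ≤ w ∧ (T = A ∨ PP T = w) := by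
  rcases le_or_gt (PP A) w with h | h
  · exact ⟨A, Subset.rfl, hA, h, Or.inl rfl⟩
  have hw : w ≠ ∞ := h.ne_top
  let f : ℝ → ℝ := fun s => (PP (A ∩ Iic s)).toReal
  have hf : LipschitzWith 1 f := by
    apply LipschitzWith.of_le_add_mul
    intro x y
    have h1 : PP (A ∩ Iic x) ≤ PP (A ∩ Iic y) + ENNReal.ofReal |x - y| := by
      calc PP (A ∩ Iic x) ≤ PP ((A ∩ Iic y) ∪ Ioc y x) := by
            apply measure_mono
            rintro z ⟨hz, hz'⟩
            by_cases hzy : z ≤ y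
            · exact Or.inl ⟨hz, hzy⟩
            · exact Or.inr ⟨not_le.1 hzy, hz'⟩
        _ ≤ PP (A ∩ Iic y) + PP (Ioc y x) := measure_union_le _ _
        _ ≤ PP (A ∩ Iic y) + ENNReal.ofReal |x - y| := by
            gcongr
            calc PP (Ioc y x) ≤ volume (Ioc y x) := Measure.restrict_apply_le _ _
              _ = ENNReal.ofReal (x - y) := by simp
              _ ≤ _ := ENNReal.ofReal_le_ofReal (le_abs_self _)
    have h2 := ENNReal.toReal_mono (by finiteness) h1
    rw [ENNReal.toReal_add (by finiteness) (by finiteness), ENNReal.toReal_ofReal (abs_nonneg _)] at h2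
    simpa [f, Real.dist_eq] using h2
  have h0 : f 0 = 0 := by
    have : PP (A ∩ Iic 0) ≤ 0 := by
      calc PP (A ∩ Iic 0) ≤ PP (Iic 0) := measure_mono inter_subset_right
        _ = volume (Iic 0 ∩ Icc (0:ℝ) 1) := by rw [PP, Measure.restrict_apply measurableSet_Iic]
        _ ≤ volume ({0} : Set ℝ) := measure_mono (by rintro z ⟨h1, h2⟩; exact le_antisymm h1 h2.1)
        _ = 0 := by simp
    simp [f, le_antisymm this bot_le]
  have h1 : f 1 = (PP A).toReal := by
    have : PP (A ∩ Iic 1) = PP A := by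
      rw [PP, Measure.restrict_apply (hA.inter measurableSet_Iic), Measure.restrict_apply hA]
      congr 1; ext z; simp; tauto
    simp [f, this]
  have hiv := intermediate_value_Icc (zero_le_one' ℝ) hf.continuous.continuousOn
  have hm : w.toReal ∈ Icc (f 0) (f 1) := by
    rw [h0, h1]
    exact ⟨ENNReal.toReal_nonneg, ENNReal.toReal_mono (by finiteness) h.le⟩
  obtain ⟨s, -, hs⟩ := hiv hm
  have : PP (A ∩ Iic s) = w := (ENNReal.toReal_eq_toReal_iff' (by finiteness) hw).1 hs
  exact ⟨_, inter_subset_left, hA.inter measurableSet_Iic, this.le, Or.inr this⟩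

/-- greedy allocation along a well-founded transitive-free relation -/
lemma greedy (R M : ℕ → ℕ → Prop) (hR : WellFounded R) (w : ℕ → ℝ≥0∞) :
    ∃ T : ℕ → Set ℝ, (∀ i, MeasurableSet (T i)) ∧ (∀ i, PP (T i) ≤ w i) ∧
      (∀ i j, R j i → M j i → Disjoint (T j) (T i)) ∧
      ∀ i, PP (T i) = w i ∨ ∀ t, t ∈ T i ∨ ∃ j, R j i ∧ M j i ∧ t ∈ T j := by
  have hsel : ∀ (A : Set ℝ) (w : ℝ≥0∞), ∃ T : Set ℝ, MeasurableSet T ∧ PP T ≤ w ∧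
      (MeasurableSet A → T ⊆ A ∧ (T = A ∨ PP T = w)) := by
    intro A w
    by_cases hA : MeasurableSet A
    · obtain ⟨T, h1, h2, h3, h4⟩ := PP_sel A hA w
      exact ⟨T, h2, h3, fun _ => ⟨h1, h4⟩⟩
    · exact ⟨∅, MeasurableSet.empty, by simp, fun h => absurd h hA⟩
  choose sel hs1 hs2 hs3 using hsel
  let F : (i : ℕ) → ((j : ℕ) → R j i → Set ℝ) → Set ℝ := fun i T =>
    sel (⋃ j, ⋃ (h : R j i), ⋃ (_ : M j i), T j h)ᶜ (w i)
  let T : ℕ → Set ℝ := hR.fix F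
  have hT : ∀ i, T i = sel (⋃ j, ⋃ (_ : R j i), ⋃ (_ : M j i), T j)ᶜ (w i) := fun i => hR.fix_eq F i
  have hTm : ∀ i, MeasurableSet (T i) := fun i => by rw [hT]; exact hs1 _ _
  have hAm : ∀ i, MeasurableSet (⋃ j, ⋃ (_ : R j i), ⋃ (_ : M j i), T j)ᶜ := fun i =>
    (MeasurableSet.iUnion fun j => MeasurableSet.iUnion fun _ => MeasurableSet.iUnion fun _ => hTm j).compl
  refine ⟨T, hTm, fun i => by rw [hT]; exact hs2 _ _, ?_, ?_⟩
  · intro i j h1 h2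
    have := (hs3 _ (w i) (hAm i)).1
    rw [← hT] at this
    rw [Set.disjoint_left]
    intro t ht ht'
    apply this ht'
    simp only [mem_iUnion]
    exact ⟨j, h1, h2, ht⟩
  · intro i
    have := (hs3 _ (w i) (hAm i)).2
    rw [← hT] at this
    rcases this with h | h
    · right
      intro t
      by_cases ht : t ∈ T i
      · exact Or.inl ht
      · right
        rw [h] at ht
        simpa using ht
    · exact Or.inl h

lemma core {X : Type*} [MetricSpace X] (c : ℕ → X) (r : ℕ → ℝ) (D : ℝ) (hD : ∀ i, r i ≤ D)
    (hD0 : 0 < D)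
    (w : ℕ → ℝ≥0) (g : ℕ → ℝ≥0∞) :
    ∃ J : Set ℕ, (∀ x, 1 ≤ ∑' i, (if x ∈ closedBall (c i) (r i) then (w i : ℝ≥0∞) else 0) →
      ∃ j ∈ J, x ∈ closedBall (c j) (5 * r j)) ∧
      ∑' i, J.indicator g i ≤ ∑' i, 2 * (w i : ℝ≥0∞) * g i := by
  have hk : ∀ i, ∃ k : ℕ∞, (r i ≤ 0 → k = ⊤) ∧ (0 < r i → ∃ n : ℕ, k = n ∧ D / 2 ^ (n+1) < r i ∧
      r i ≤ D / 2 ^ n) := by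
    intro i
    rcases le_or_gt (r i) 0 with h | h
    · exact ⟨⊤, fun _ => rfl, fun h' => absurd h' h.not_gt⟩
    · have hex : ∃ n : ℕ, D / 2 ^ (n+1) < r i := by
        obtain ⟨n, hn⟩ := exists_pow_lt_of_lt_one (div_pos h hD0) (by norm_num : (1/2:ℝ) < 1)
        refine ⟨n, ?_⟩
        rw [lt_div_iff₀ hD0] at hn
        calc D / 2 ^ (n+1) ≤ D / 2 ^ n := by
              gcongr
              · norm_num
              · omega
          _ = (1/2)^n * D := by rw [one_div, inv_pow]; ring
          _ < _ := hn
      refine ⟨(Nat.find hex : ℕ∞), fun h' => absurd h' h.not_ge, fun _ => ⟨_, rfl, Nat.find_spec hex, ?_⟩⟩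
      rcases hn : Nat.find hex with _ | m
      · simpa using hD i
      · have := Nat.find_min hex (m := m) (by omega)
        exact not_lt.1 this
  choose k hk1 hk2 using hk
  have hcomp : ∀ i j, k j ≤ k i → (closedBall (c j) (r j) ∩ closedBall (c i) (r i)).Nonempty →
      r i ≤ 2 * r j := by
    rintro i j hji ⟨z, hz1, hz2⟩
    have hj0 : 0 ≤ r j := dist_nonneg.trans hz1
    rcases le_or_gt (r i) 0 with h | h
    · linarith
    obtain ⟨n, hn, hn1, hn2⟩ := hk2 i h
    have hjp : 0 < r j := by
      by_contra hcon
      rw [hk1 j (not_lt.1 hcon), hn] at hji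
      simp at hji
    obtain ⟨m, hm, hm1, hm2⟩ := hk2 j hjp
    have hmn : m ≤ n := by rw [hm, hn] at hji; exact_mod_cast hji
    have : D / 2 ^ (n+1) ≤ D / 2 ^ (m+1) := by
      gcongr
      norm_num
    have h3 : D / 2 ^ n = 2 * (D / 2 ^ (n+1)) := by rw [pow_succ]; field_simp
    linarith
  let key : ℕ → ℕ∞ ×ₗ ℕ := fun i => toLex (k i, i)
  have hinj : Function.Injective key := fun i j h => by
    have := congrArg (fun z => (ofLex z).2) h
    simpa [key] using this
  have hle : ∀ i j, key j ≤ key i → k j ≤ k i := by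
    intro i j h
    rw [Prod.Lex.le_iff] at h
    rcases h with h | h
    · exact h.le
    · exact h.1.le
  obtain ⟨T, hT1, hT2, hT3, hT4⟩ := greedy (fun j i => key j < key i)
    (fun j i => (closedBall (c j) (r j) ∩ closedBall (c i) (r i)).Nonempty)
    (InvImage.wf key wellFounded_lt) (fun i => 2 * (w i : ℝ≥0∞))
  obtain ⟨t, ht⟩ := exists_le_lintegral (μ := PP)
    (f := fun t => ∑' i, (T i).indicator (fun _ => g i) t)
    (Measurable.tsum fun i => measurable_const.indicator (hT1 i)).aemeasurable
  refine ⟨{i | t ∈ T i}, ?_, ?_⟩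
  · intro x hx
    have hsat : ∃ i, x ∈ closedBall (c i) (r i) ∧ PP (T i) ≠ 2 * (w i : ℝ≥0∞) := by
      by_contra! hcon
      let S : ℕ → Set ℝ := fun i => if x ∈ closedBall (c i) (r i) then T i else ∅
      have hS1 : ∀ i, MeasurableSet (S i) := by
        intro i; dsimp only [S]; split_ifs
        · exact hT1 i
        · exact MeasurableSet.empty
      have hS2 : Pairwise (Function.onFun Disjoint S) := by
        intro i j hij
        dsimp only [Function.onFun, S]
        split_ifs with h1 h2
        · rcases lt_or_gt_of_ne (hinj.ne hij) with h | h
          · exact hT3 j i h ⟨x, h1, h2⟩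
          · exact (hT3 i j h ⟨x, h2, h1⟩).symm
        all_goals simp
      have hsum := tsum_meas_le_meas_iUnion_of_disjoint PP hS1 hS2
      have h4 : ∑' i, PP (S i) = 2 * ∑' i, (if x ∈ closedBall (c i) (r i) then (w i : ℝ≥0∞) else 0) := by
        rw [← ENNReal.tsum_mul_left]
        congr 1; ext i
        dsimp only [S]
        split_ifs with h
        · exact hcon i h
        · simp
      have h5 : (2:ℝ≥0∞) ≤ 1 := by
        calc (2:ℝ≥0∞) = 2 * 1 := by simp
          _ ≤ _ := mul_le_mul_right hx 2
          _ = _ := h4.symm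
          _ ≤ _ := hsum
          _ ≤ 1 := prob_le_one
      exact absurd h5 (by norm_num)
    obtain ⟨i, hxi, hi⟩ := hsat
    have hmain : ∃ j, key j ≤ key i ∧ (closedBall (c j) (r j) ∩ closedBall (c i) (r i)).Nonempty ∧ t ∈ T j := by
      rcases (hT4 i).resolve_left hi t with h | ⟨j, h1, h2, h3⟩
      · exact ⟨i, le_rfl, ⟨x, hxi, hxi⟩, h⟩
      · exact ⟨j, h1.le, h2, h3⟩
    obtain ⟨j, h1, h2, h3⟩ := hmain
    refine ⟨j, h3, ?_⟩
    have h4 := hcomp i j (hle i j h1) h2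
    obtain ⟨z, hz1, hz2⟩ := h2
    rw [mem_closedBall] at *
    have := dist_triangle4 x (c i) z (c j)
    rw [dist_comm (c i) z] at this
    linarith
  · have e : ∀ i, ({i | t ∈ T i} : Set ℕ).indicator g i = (T i).indicator (fun _ => g i) t := by
      intro i; simp [Set.indicator]
    calc ∑' i, ({i | t ∈ T i} : Set ℕ).indicator g i = ∑' i, (T i).indicator (fun _ => g i) t := by
          simp_rw [e]
      _ ≤ _ := ht
      _ = ∑' i, ∫⁻ t, (T i).indicator (fun _ => g i) t ∂PP :=
          lintegral_tsum fun i => (measurable_const.indicator (hT1 i)).aemeasurable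
      _ = ∑' i, g i * PP (T i) := by
          congr 1; ext i; rw [lintegral_indicator_const (hT1 i)]
      _ ≤ _ := by
          refine ENNReal.tsum_le_tsum fun i => ?_
          rw [mul_comm]
          exact mul_le_mul_left (hT2 i) _

section Aux

variable [MetricSpace X] [MeasurableSpace X]

lemma weight_empty (μ : Measure X) (q : ℝ) (ξ : Set X → ℝ≥0∞) (hξ : IsPremeasure ξ) :
    ballWeight μ q ξ ∅ = 0 := by simp [ballWeight, hξ.1]

lemma epow_anti {q : ℝ} (hq : q ≤ 0) {a b : ℝ≥0∞} (h : a ≤ b) : epow b q ≤ epow a q := by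
  unfold epow
  by_cases ha : a = 0
  · simp [ha, hq]
  · have hb : b ≠ 0 := fun hb => ha (le_antisymm (hb ▸ h) bot_le)
    simp only [ha, hb, false_and, if_false]
    have e : ∀ z : ℝ≥0∞, z ^ q = (z ^ (-q))⁻¹ := fun z => by rw [ENNReal.rpow_neg, inv_inv]
    rw [e, e]
    exact ENNReal.inv_le_inv.2 (ENNReal.rpow_le_rpow h (by linarith))

lemma xi_five (ξ : Set X → ℝ≥0∞) (hξ : IsPremeasure ξ) (K : ℝ≥0)
    (hK : ∀ (x : X) (r : ℝ), 0 < r → r ≤ 1 →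
      ξ (closedBall x (2 * r)) ≤ (K : ℝ≥0∞) * ξ (closedBall x r)) (x : X) (r : ℝ) (hr : 0 < r)
    (hr1 : r ≤ 1 / 4) :
    ξ (closedBall x (5 * r)) ≤ ((K ^ 3 : ℝ≥0) : ℝ≥0∞) * ξ (closedBall x r) := by
  have h1 := hK x r hr (by linarith)
  have h2 := hK x (2 * r) (by linarith) (by linarith)
  have h3 := hK x (2 * (2 * r)) (by linarith) (by linarith)
  calc ξ (closedBall x (5 * r)) ≤ ξ (closedBall x (2 * (2 * (2 * r)))) :=
        hξ.2 _ _ _ _ (closedBall_subset_closedBall (by linarith))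
    _ ≤ K * ξ (closedBall x (2 * (2 * r))) := h3
    _ ≤ K * (K * ξ (closedBall x (2 * r))) := by gcongr
    _ ≤ K * (K * (K * ξ (closedBall x r))) := by gcongr
    _ = _ := by push_cast; ring

lemma mu_five (μ : Measure X) [IsProbabilityMeasure μ] (hμ : MeasureBlanketed μ) :
    ∃ (M : ℝ≥0) (ρ : ℝ), 0 < ρ ∧ ∀ x ∈ measSupport μ, ∀ r, 0 < r → r ≤ ρ →
      μ (closedBall x (5 * r)) ≤ M * μ (closedBall x r) := by
  obtain ⟨a, ha, hlim⟩ := hμ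
  obtain ⟨M, hM1, hM2⟩ := ENNReal.lt_iff_exists_nnreal_btwn.1 hlim
  have hev := eventually_lt_of_limsup_lt hM1
  rw [eventually_nhdsWithin_iff, Metric.eventually_nhds_iff] at hev
  obtain ⟨ε, hε, hev⟩ := hev
  have step : ∀ x ∈ measSupport μ, ∀ r, 0 < r → r < ε →
      μ (closedBall x (a * r)) ≤ M * μ (closedBall x r) := by
    intro x hx r hr hrε
    have h1 := hev (y := r) (by simpa [Real.dist_eq, abs_of_pos hr] using hrε) hr
    have h2 : μ (closedBall x (a * r)) / μ (closedBall x r) ≤ M :=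
      (le_iSup₂ (f := fun x (_ : x ∈ measSupport μ) =>
        μ (closedBall x (a * r)) / μ (closedBall x r)) x hx).trans h1.le
    have h0 : μ (closedBall x r) ≠ 0 :=
      ((hx r hr).trans_le (measure_mono ball_subset_closedBall)).ne'
    exact (ENNReal.div_le_iff h0 (by finiteness)).1 h2
  have iter : ∀ (n : ℕ), ∀ x ∈ measSupport μ, ∀ r, 0 < r → a ^ n * r < ε →
      μ (closedBall x (a ^ n * r)) ≤ ((M ^ n : ℝ≥0) : ℝ≥0∞) * μ (closedBall x r) := by
    intro n x hx r hr
    have ha0 : 0 < a := by linarith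
    induction n with
    | zero => intro _; simp
    | succ n ih =>
      intro h
      have hp : 0 < a ^ n * r := by positivity
      have e : a ^ (n+1) * r = a * (a ^ n * r) := by ring
      have hlt : a ^ n * r < ε := by nlinarith
      rw [e]
      calc _ ≤ M * μ (closedBall x (a ^ n * r)) := step x hx _ hp hlt
        _ ≤ M * (((M ^ n : ℝ≥0) : ℝ≥0∞) * μ (closedBall x r)) := by gcongr; exact ih hlt
        _ = _ := by push_cast; ring
  obtain ⟨n, hn⟩ := pow_unbounded_of_one_lt 5 ha
  have hap : 0 < a ^ n := by linarith
  refine ⟨M ^ n, ε / (2 * a ^ n), by positivity, fun x hx r hr hrρ => ?_⟩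
  have : a ^ n * r < ε := by
    rw [le_div_iff₀ (by positivity)] at hrρ
    nlinarith
  refine le_trans (measure_mono (closedBall_subset_closedBall ?_)) (iter n x hx r hr this)
  nlinarith

/-- Doubling of the ball weights at points of `F`. -/
def WDbl (μ : Measure X) (q : ℝ) (ξ : Set X → ℝ≥0∞) (F : Set X) (C : ℝ≥0) (ρ : ℝ) : Prop :=
  ∀ x ∈ F, ∀ r, 0 < r → r ≤ ρ →
    ballWeight μ q ξ (closedBall x (5 * r)) ≤ C * ballWeight μ q ξ (closedBall x r)

lemma Hd_le (μ : Measure X) (q : ℝ) (ξ : Set X → ℝ≥0∞) (hξ : IsPremeasure ξ)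
    (F : Set X) (C : ℝ≥0) (hC : 1 ≤ C) (ρ : ℝ) (hρ : 0 < ρ) (h : WDbl μ q ξ F C ρ) :
    H0 μ q ξ F ≤ ((2 * C : ℝ≥0) : ℝ≥0∞) * W0 μ q ξ F := by
  refine iSup₂_le fun δ hδ => ?_
  set η : ℝ := min (δ / 10) (ρ / 2) with hη
  have hη0 : 0 < η := lt_min (by linarith) (by linarith)
  have hη1 : η ≤ δ / 10 := min_le_left _ _
  have hη2 : η ≤ ρ / 2 := min_le_right _ _
  suffices Hd μ q ξ δ F ≤ ((2 * C : ℝ≥0) : ℝ≥0∞) * Wd μ q ξ η F by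
    refine this.trans ?_
    gcongr
    exact le_iSup₂ (f := fun δ (_ : 0 < δ) => Wd μ q ξ δ F) η hη0
  by_cases hF : F = ∅
  · simp [Hd, hF]
  have hD0 : ((2 * C : ℝ≥0) : ℝ≥0∞) ≠ 0 := by
    have : (2 * C : ℝ≥0) ≠ 0 := by positivity
    exact_mod_cast this
  rw [← ENNReal.div_le_iff' hD0 ENNReal.coe_ne_top]
  simp only [Wd, hF, if_false]
  refine le_iInf fun w => le_iInf fun c => le_iInf fun r => le_iInf fun hcov => ?_
  rw [ENNReal.div_le_iff' hD0 ENNReal.coe_ne_top]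
  obtain ⟨hc1, hc2, hc3⟩ := hcov
  let r' : ℕ → ℝ := fun i => min (r i) (2 * η)
  have hr' : ∀ i, closedBall (c i) (r' i) = closedBall (c i) (r i) := by
    intro i
    refine Subset.antisymm (closedBall_subset_closedBall (min_le_left _ _)) fun x hx => ?_
    have h0 : 0 ≤ r i := dist_nonneg.trans hx
    refine le_min hx ((dist_le_diam_of_mem isBounded_closedBall hx (mem_closedBall_self h0)).trans (hc2 i))
  obtain ⟨J, hJ1, hJ2⟩ := core c r' (2 * η) (fun i => min_le_right _ _) (by linarith) w
    (fun i => ballWeight μ q ξ (closedBall (c i) (5 * r' i)))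
  let s : ℕ → ℝ := fun i => if i ∈ J then 5 * r' i else -1
  have hs : ∀ i, ballWeight μ q ξ (closedBall (c i) (s i)) =
      J.indicator (fun i => ballWeight μ q ξ (closedBall (c i) (5 * r' i))) i := by
    intro i
    by_cases hi : i ∈ J
    · simp [s, hi]
    · have : closedBall (c i) (-1) = ∅ := closedBall_eq_empty.2 (by norm_num)
      simp [s, hi, this, weight_empty μ q ξ hξ]
  have hcov : IsCenteredCover F δ c s := by
    refine ⟨hc1, fun i => ?_, fun x hx => ?_⟩
    · by_cases hi : i ∈ J
      · simp only [s, hi, if_true]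
        rcases lt_or_ge (5 * r' i) 0 with h0 | h0
        · rw [closedBall_eq_empty.2 h0]; simp; linarith
        · refine (diam_closedBall h0).trans ?_
          have : r' i ≤ 2 * η := min_le_right _ _
          linarith
      · have : closedBall (c i) (-1) = ∅ := closedBall_eq_empty.2 (by norm_num)
        simp [s, hi, this, hδ.le]
    · obtain ⟨j, hj, hxj⟩ := hJ1 x (by simpa only [hr'] using hc3 x hx)
      refine mem_iUnion.2 ⟨j, ?_⟩
      simpa only [s, hj, if_true] using hxj
  have hdb : ∀ i, ballWeight μ q ξ (closedBall (c i) (5 * r' i)) ≤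
      C * ballWeight μ q ξ (closedBall (c i) (r i)) := by
    intro i
    rw [← hr' i]
    rcases lt_trichotomy (r' i) 0 with h0 | h0 | h0
    · rw [closedBall_eq_empty.2 (by linarith), weight_empty μ q ξ hξ]; exact bot_le
    · rw [h0, mul_zero]
      exact le_mul_of_one_le_left bot_le (by exact_mod_cast hC)
    · exact h (c i) (hc1 i) _ h0 ((min_le_right _ _).trans (by linarith))
  simp only [Hd, hF, if_false]
  refine (iInf₂_le_of_le c s (iInf_le_of_le hcov le_rfl)).trans ?_
  simp_rw [hs]
  refine hJ2.trans ?_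
  rw [← ENNReal.tsum_mul_left]
  refine ENNReal.tsum_le_tsum fun i => ?_
  calc _ ≤ 2 * (w i : ℝ≥0∞) * (C * ballWeight μ q ξ (closedBall (c i) (r i))) := by
        gcongr; exact hdb i
    _ = _ := by push_cast; ring

lemma Wd_le_Hd (μ : Measure X) (q : ℝ) (ξ : Set X → ℝ≥0∞) (δ : ℝ) (F : Set X) :
    Wd μ q ξ δ F ≤ Hd μ q ξ δ F := by
  by_cases hF : F = ∅
  · simp [Wd, hF]
  simp only [Wd, Hd, hF, if_false]
  refine le_iInf fun c => le_iInf fun r => le_iInf fun hcov => ?_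
  refine iInf_le_of_le (fun _ => 1) (iInf₂_le_of_le c r (iInf_le_of_le ⟨hcov.1, hcov.2.1, ?_⟩ ?_))
  · intro x hx
    obtain ⟨i, hi⟩ := mem_iUnion.1 (hcov.2.2 hx)
    refine le_trans ?_ (ENNReal.le_tsum i)
    simp only [hi, if_true]; simp
  · simp

lemma WM_le_HM (μ : Measure X) (q : ℝ) (ξ : Set X → ℝ≥0∞) (E : Set X) :
    WM μ q ξ E ≤ HM μ q ξ E :=
  iSup₂_mono fun F _ => iSup₂_mono fun δ _ => Wd_le_Hd μ q ξ δ F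

lemma Hd_union (μ : Measure X) (q : ℝ) (ξ : Set X → ℝ≥0∞) (δ : ℝ) (F G : Set X) :
    Hd μ q ξ δ (F ∪ G) ≤ Hd μ q ξ δ F + Hd μ q ξ δ G := by
  by_cases hF : F = ∅
  · simp [hF]
  by_cases hG : G = ∅
  · simp [hG]
  have hFG : F ∪ G ≠ ∅ := fun h => hF (union_empty_iff.1 h).1
  simp only [Hd, hF, hG, hFG, if_false]
  simp only [ENNReal.iInf_add, ENNReal.add_iInf]
  refine le_iInf fun c' => le_iInf fun r' => le_iInf fun h2 => le_iInf fun c => le_iInf fun r =>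
    le_iInf fun h1 => ?_
  let e : ℕ ≃ ℕ ⊕ ℕ := (Denumerable.eqv (ℕ ⊕ ℕ)).symm
  let cc : ℕ ⊕ ℕ → X := Sum.elim c c'
  let rr : ℕ ⊕ ℕ → ℝ := Sum.elim r r'
  refine iInf₂_le_of_le (cc ∘ e) (rr ∘ e) (iInf_le_of_le ⟨?_, ?_, ?_⟩ ?_)
  · intro i
    simp only [Function.comp]
    rcases e i with j | j
    · exact Or.inl (h1.1 j)
    · exact Or.inr (h2.1 j)
  · intro i
    simp only [Function.comp]
    rcases e i with j | j
    · exact h1.2.1 j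
    · exact h2.2.1 j
  · rintro x (hx | hx)
    · obtain ⟨i, hi⟩ := mem_iUnion.1 (h1.2.2 hx)
      exact mem_iUnion.2 ⟨e.symm (Sum.inl i), by simpa [cc, rr] using hi⟩
    · obtain ⟨i, hi⟩ := mem_iUnion.1 (h2.2.2 hx)
      exact mem_iUnion.2 ⟨e.symm (Sum.inr i), by simpa [cc, rr] using hi⟩
  · have := e.tsum_eq (fun s => ballWeight μ q ξ (closedBall (cc s) (rr s)))
    simp only [Function.comp]
    rw [this, ENNReal.summable.tsum_sum ENNReal.summable]
    simp [cc, rr]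

lemma Hd_off_supp [SeparableSpace X] (μ : Measure X) (q : ℝ) (hq : 0 < q) (ξ : Set X → ℝ≥0∞)
    (δ : ℝ) (hδ : 0 < δ) (F : Set X) (hF : ∀ x ∈ F, x ∉ measSupport μ) : Hd μ q ξ δ F = 0 := by
  by_cases hF0 : F = ∅
  · simp [Hd, hF0]
  have h1 : ∀ x, ∃ r : ℝ, 0 < r ∧ r ≤ δ ∧ (x ∈ F → μ (closedBall x r) = 0) := by
    intro x
    by_cases hx : x ∈ F
    · have := hF x hx
      simp only [measSupport, mem_setOf_eq, not_forall, not_lt] at this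
      obtain ⟨r, hr, h0⟩ := this
      refine ⟨min (r / 2) δ, lt_min (by linarith) hδ, min_le_right _ _, fun _ => ?_⟩
      refine le_antisymm ((measure_mono ?_).trans h0) bot_le
      exact closedBall_subset_ball ((min_le_left _ _).trans_lt (by linarith))
    · exact ⟨δ, hδ, le_rfl, fun h => absurd h hx⟩
  choose r hr1 hr2 hr3 using h1
  have : SecondCountableTopology X := UniformSpace.secondCountable_of_separable X
  obtain ⟨t, htF, htc, htU⟩ := countable_cover_nhdsWithin (s := F) (f := fun x => closedBall x (r x))
    (fun x _ => mem_nhdsWithin_of_mem_nhds (closedBall_mem_nhds x (hr1 x)))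
  have htne : t.Nonempty := by
    obtain ⟨x, hx⟩ := nonempty_iff_ne_empty.2 hF0
    obtain ⟨y, hy, -⟩ := mem_iUnion₂.1 (htU hx)
    exact ⟨y, hy⟩
  obtain ⟨c, hc⟩ := htc.exists_eq_range htne
  have hcF : ∀ i, c i ∈ F := fun i => htF (hc ▸ mem_range_self i)
  simp only [Hd, hF0, if_false]
  refine le_antisymm ?_ bot_le
  refine iInf₂_le_of_le c (fun i => r (c i)) (iInf_le_of_le ⟨hcF, ?_, ?_⟩ ?_)
  · intro i
    exact (diam_closedBall (hr1 _).le).trans (by linarith [hr2 (c i)])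
  · intro x hx
    obtain ⟨y, hy, hxy⟩ := mem_iUnion₂.1 (htU hx)
    rw [hc] at hy
    obtain ⟨i, rfl⟩ := hy
    exact mem_iUnion.2 ⟨i, hxy⟩
  · have : ∀ i, ballWeight μ q ξ (closedBall (c i) (r (c i))) = 0 := by
      intro i
      simp [ballWeight, epow, hr3 _ (hcF i), hq, hq.not_ge]
    simp [this]

lemma HM_le [SeparableSpace X] (μ : Measure X) [IsProbabilityMeasure μ]
    (q : ℝ) (ξ : Set X → ℝ≥0∞) (hξ : IsPremeasure ξ) (hξD : PremeasureBlanketed ξ)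
    (hq : q ≤ 0 ∨ (0 < q ∧ MeasureBlanketed μ)) :
    ∃ C : ℝ≥0, 1 ≤ C ∧ ∀ E : Set X, HM μ q ξ E ≤ ((2 * C : ℝ≥0) : ℝ≥0∞) * WM μ q ξ E := by
  obtain ⟨K, hK1, hK⟩ := hξD
  have hK3 : 1 ≤ K ^ 3 := one_le_pow₀ hK1.le
  rcases hq with hq | ⟨hq, hμ⟩
  · refine ⟨K ^ 3, hK3, fun E => iSup₂_le fun F hF => ?_⟩
    refine (Hd_le μ q ξ hξ F _ hK3 (1/4) (by norm_num) ?_).trans ?_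
    · intro x _ r hr hr1
      unfold ballWeight
      calc _ ≤ epow (μ (closedBall x r)) q * (((K ^ 3 : ℝ≥0) : ℝ≥0∞) * ξ (closedBall x r)) :=
            mul_le_mul' (epow_anti hq (measure_mono (closedBall_subset_closedBall (by linarith))))
              (xi_five ξ hξ K hK x r hr hr1)
        _ = _ := by ring
    · gcongr
      exact le_iSup₂ (f := fun F (_ : F ⊆ E) => W0 μ q ξ F) F hF
  · obtain ⟨M, ρ, hρ, hM⟩ := mu_five μ hμ
    let C : ℝ≥0 := max 1 (M ^ q * K ^ 3)
    have hC : 1 ≤ C := le_max_left _ _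
    refine ⟨C, hC, fun E => iSup₂_le fun F hF => ?_⟩
    have hsub : F ∩ measSupport μ ⊆ E := inter_subset_left.trans hF
    have h1 : H0 μ q ξ F ≤ H0 μ q ξ (F ∩ measSupport μ) := by
      refine iSup₂_mono fun δ hδ => ?_
      have h2 := Hd_union μ q ξ δ (F ∩ measSupport μ) (F \ measSupport μ)
      rw [inter_union_diff, Hd_off_supp μ q hq ξ δ hδ (F \ measSupport μ) (fun x hx => hx.2),
        add_zero] at h2
      exact h2
    refine h1.trans ((Hd_le μ q ξ hξ _ _ hC (min (1/4) ρ) (lt_min (by norm_num) hρ) ?_).trans ?_)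
    · intro x hx r hr hr1
      have e : ∀ a : ℝ≥0∞, epow a q = a ^ q := fun a => by simp [epow, hq.not_ge]
      simp only [ballWeight, e]
      calc _ ≤ ((M : ℝ≥0∞) * μ (closedBall x r)) ^ q *
              (((K ^ 3 : ℝ≥0) : ℝ≥0∞) * ξ (closedBall x r)) :=
            mul_le_mul' (ENNReal.rpow_le_rpow (hM x hx.2 r hr (hr1.trans (min_le_right _ _))) hq.le)
              (xi_five ξ hξ K hK x r hr (hr1.trans (min_le_left _ _)))
        _ = ((M ^ q * K ^ 3 : ℝ≥0) : ℝ≥0∞) *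
              (μ (closedBall x r) ^ q * ξ (closedBall x r)) := by
            rw [ENNReal.mul_rpow_of_nonneg _ _ hq.le, ENNReal.coe_mul,
              ENNReal.coe_rpow_of_nonneg _ hq.le]
            ring
        _ ≤ _ := by
            gcongr
            exact le_max_right _ _
    · gcongr
      exact le_iSup₂ (f := fun F (_ : F ⊆ E) => W0 μ q ξ F) _ hsub

end Aux

section Thms

variable [MetricSpace X] [SeparableSpace X] [MeasurableSpace X] [BorelSpace X]
variable [MetricSpace X'] [SeparableSpace X'] [MeasurableSpace X'] [BorelSpace X']

theorem stmt9 (μ : Measure X) [IsProbabilityMeasure μ]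
    (q : ℝ) (ξ : Set X → ℝ≥0∞) (hξ : IsPremeasure ξ) (hξD : PremeasureBlanketed ξ)
    (hq : q ≤ 0 ∨ (0 < q ∧ MeasureBlanketed μ)) :
    ∃ β : ℝ≥0, 0 < β ∧
      (∀ E : Set X, (β : ℝ≥0∞) * HM μ q ξ E ≤ WM μ q ξ E) ∧
      ∀ E : Set X, (HM μ q ξ E = ∞ ↔ WM μ q ξ E = ∞) := by
  obtain ⟨C, hC, h⟩ := HM_le μ q ξ hξ hξD hq
  have hD : (2 * C : ℝ≥0) ≠ 0 := by positivity
  have key : ∀ E : Set X, (((2 * C)⁻¹ : ℝ≥0) : ℝ≥0∞) * HM μ q ξ E ≤ WM μ q ξ E := by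
    intro E
    calc _ ≤ (((2 * C)⁻¹ : ℝ≥0) : ℝ≥0∞) * (((2 * C : ℝ≥0) : ℝ≥0∞) * WM μ q ξ E) := by
          gcongr; exact h E
      _ = WM μ q ξ E := by
          rw [← mul_assoc, ← ENNReal.coe_mul, inv_mul_cancel₀ hD]; simp
  refine ⟨(2 * C)⁻¹, by positivity, key, fun E => ⟨fun hE => ?_, fun hE => ?_⟩⟩
  · have := h E
    by_contra hW
    rw [hE] at this
    exact absurd (top_le_iff.1 this) (ENNReal.mul_ne_top ENNReal.coe_ne_top hW)
  · exact top_le_iff.1 (hE ▸ WM_le_HM μ q ξ E)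

end Thms
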